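/- Suppose the linear homogeneous system x(t+1) = A(t)x(t) admits an exponential dichotomy. Then x = 0 is the unique bounded solution of the system: if x : ℤ → 𝒳 satisfies x(t+1) = A(t)x(t) for all t ∈ ℤ and sup_{t ∈ ℤ} ‖x(t)‖ < ∞, then x(t) = 0 for all t ∈ ℤ. -/

import Mathlib

/-!
For a solution `x`, the vector `c = (X t)⁻¹ (x t)` does not depend on `t`. Hence the stable part
satisfies `X t P c = (X t P (X s)⁻¹) (x s)` for every `s`, and if `x` is bounded the right-hand
side tends to `0` as `s → -∞`. In the same way `X t (1 - P) c = 0` by letting `s → +∞`, so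
`x t = X t c = 0`.
-/

open Filter Topology

theorem tendsto_zero_of_norm_le_const_mul_zpow {ι E : Type*} [SeminormedAddCommGroup E]
    {l : Filter ι} {f : ι → E} {k : ι → ℤ} {b r : ℝ} (hr : 1 < r) (hk : Tendsto k l atBot)
    (hf : ∀ᶠ i in l, ‖f i‖ ≤ b * r ^ k i) : Tendsto f l (𝓝 0) := by
  have hpow : Tendsto (fun i ↦ r ^ k i) l (𝓝 0) := by
    simpa only [Function.comp_def, Real.rpow_intCast] using
      (tendsto_rpow_atBot_of_base_gt_one r hr).comp (tendsto_intCast_atBot_iff.mpr hk)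
  exact squeeze_zero_norm' hf (by simpa only [mul_zero] using hpow.const_mul b)

theorem eq_zero_of_tendsto_zero_of_eventually_apply_eq {ι 𝕜 E F : Type*}
    [NontriviallyNormedField 𝕜] [SeminormedAddCommGroup E] [NormedSpace 𝕜 E]
    [NormedAddCommGroup F] [NormedSpace 𝕜 F] {l : Filter ι} [l.NeBot]
    {T : ι → E →L[𝕜] F} {x : ι → E} {y : F} (hT : Tendsto T l (𝓝 0))
    (hx : l.IsBoundedUnder (· ≤ ·) (norm ∘ x)) (hy : ∀ᶠ i in l, T i (x i) = y) : y = 0 := by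
  have hlim : Tendsto (fun i ↦ T i (x i)) l (𝓝 0) :=
    hT.op_zero_isBoundedUnder_le hx (fun S z ↦ S z) fun S z ↦ S.le_opNorm z
  exact tendsto_nhds_unique (tendsto_const_nhds.congr' (hy.mono fun _ h ↦ h.symm)) hlim

theorem fundamental_inverse_apply_solution_eq {α β : Type*} {A : ℤ → α → α} {X : ℤ → β → α}
    {Xinv : ℤ → α → β} (hX : ∀ t, X (t + 1) = A t ∘ X t)
    (hright : ∀ t, Function.RightInverse (Xinv t) (X t))
    (hleft : ∀ t, Function.LeftInverse (Xinv t) (X t))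
    {x : ℤ → α} (hx : ∀ t, x (t + 1) = A t (x t)) (s t : ℤ) :
    Xinv s (x s) = Xinv t (x t) := by
  have hperiodic : Function.Periodic (fun t ↦ Xinv t (x t)) 1 := fun t ↦
    calc Xinv (t + 1) (x (t + 1))
        = Xinv (t + 1) (A t (X t (Xinv t (x t)))) := by rw [hx, hright t]
      _ = Xinv (t + 1) (X (t + 1) (Xinv t (x t))) := by rw [hX, Function.comp_apply]
      _ = Xinv t (x t) := hleft (t + 1) _
  have hzero (t : ℤ) : Xinv t (x t) = Xinv 0 (x 0) := by
    simpa only [smul_eq_mul, mul_one] using hperiodic.zsmul_eq t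
  rw [hzero s, hzero t]

theorem stmt_2_general {𝕜 E : Type*} [NontriviallyNormedField 𝕜] [NormedAddCommGroup E]
    [NormedSpace 𝕜 E] {A X Xinv : ℤ → E →L[𝕜] E} (hX : ∀ t, X (t + 1) = A t * X t)
    (hright : ∀ t, X t * Xinv t = 1) (hleft : ∀ t, Xinv t * X t = 1) {P : E →L[𝕜] E}
    (hstable : ∀ t, Tendsto (fun s ↦ X t * P * Xinv s) atBot (𝓝 0))
    (hunstable : ∀ t, Tendsto (fun s ↦ X t * (1 - P) * Xinv s) atTop (𝓝 0))
    {x : ℤ → E} (hx : ∀ t, x (t + 1) = A t (x t)) (hbdd : ∃ C : ℝ, ∀ t, ‖x t‖ ≤ C) (t : ℤ) :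
    x t = 0 := by
  have hconst (s : ℤ) : Xinv s (x s) = Xinv t (x t) :=
    fundamental_inverse_apply_solution_eq (X := fun t ↦ ⇑(X t)) (Xinv := fun t ↦ ⇑(Xinv t))
      (fun t ↦ congrArg DFunLike.coe (hX t)) (fun t ↦ DFunLike.congr_fun (hright t))
      (fun t ↦ DFunLike.congr_fun (hleft t)) hx s t
  have hP : X t (P (Xinv t (x t))) = 0 :=
    eq_zero_of_tendsto_zero_of_eventually_apply_eq (hstable t) (isBoundedUnder_of hbdd)
      (.of_forall fun s ↦ congrArg (X t ∘ P) (hconst s))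
  have hQ : X t ((1 - P) (Xinv t (x t))) = 0 :=
    eq_zero_of_tendsto_zero_of_eventually_apply_eq (hunstable t) (isBoundedUnder_of hbdd)
      (.of_forall fun s ↦ congrArg (X t ∘ (1 - P : E →L[𝕜] E)) (hconst s))
  calc x t = X t (Xinv t (x t)) := (DFunLike.congr_fun (hright t) (x t)).symm
    _ = X t (P (Xinv t (x t))) + X t ((1 - P) (Xinv t (x t))) := by
      rw [← map_add, ← add_apply, add_sub_cancel, one_apply_eq_self]
    _ = 0 := by rw [hP, hQ, add_zero]

/-- If the linear system `x(t+1) = A(t)x(t)` admits an exponential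
dichotomy (with principal fundamental operator solution `X`, `X(t₀) = I`, projection `P`
and constants `α₁, α₂, β₁, β₂ > 0`), then `x = 0` is the unique bounded solution: any
solution `x` with `sup_t ‖x t‖ < ∞` vanishes identically. -/
theorem stmt_2 {𝕏 : Type*} [NormedAddCommGroup 𝕏] [NormedSpace ℝ 𝕏] [CompleteSpace 𝕏]
    (A X Xinv : ℤ → 𝕏 →L[ℝ] 𝕏) (t₀ : ℤ)
    (hX : ∀ t : ℤ, X (t + 1) = A t * X t) (hX0 : X t₀ = 1)
    (hXinv : ∀ t : ℤ, X t * Xinv t = 1) (hXinv' : ∀ t : ℤ, Xinv t * X t = 1)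
    (P : 𝕏 →L[ℝ] 𝕏) (hP : P * P = P)
    (α₁ α₂ β₁ β₂ : ℝ) (hα₁ : 0 < α₁) (hα₂ : 0 < α₂) (hβ₁ : 0 < β₁) (hβ₂ : 0 < β₂)
    (hd₁ : ∀ s t : ℤ, s ≤ t → ‖X t * P * Xinv s‖ ≤ β₁ * (1 + α₁) ^ (s - t))
    (hd₂ : ∀ s t : ℤ, t ≤ s → ‖X t * (1 - P) * Xinv s‖ ≤ β₂ * (1 + α₂) ^ (t - s))
    (x : ℤ → 𝕏) (hx : ∀ t : ℤ, x (t + 1) = A t (x t))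
    (hxbdd : ∃ C : ℝ, ∀ t : ℤ, ‖x t‖ ≤ C) :
    ∀ t : ℤ, x t = 0 := by
  have hstable (t : ℤ) : Tendsto (fun s ↦ X t * P * Xinv s) atBot (𝓝 0) :=
    tendsto_zero_of_norm_le_const_mul_zpow (lt_add_of_pos_right 1 hα₁)
      (tendsto_atBot_add_const_right atBot (-t) tendsto_id)
      ((eventually_le_atBot t).mono fun s ↦ hd₁ s t)
  have hunstable (t : ℤ) : Tendsto (fun s ↦ X t * (1 - P) * Xinv s) atTop (𝓝 0) :=
    tendsto_zero_of_norm_le_const_mul_zpow (lt_add_of_pos_right 1 hα₂)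
      (tendsto_atBot_add_const_left atTop t tendsto_neg_atTop_atBot)
      ((eventually_ge_atTop t).mono fun s ↦ hd₂ s t)
  exact stmt_2_general hX hXinv hXinv' hstable hunstable hx hxbdd
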